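/- Let h be even and let w be a divisor of q+1. Let L̄ ≤ M_ℓ be a subgroup such that |L̄ ∩ Z| = w and L̄ is the internal direct product of L̄ ∩ Z and a subgroup S isomorphic to the alternating group A₅. Then the number N of orbits of L̄ acting on O is as follows: if 5 | q−1, then N = 2 + (q−16)/60 + (q/4)·((q−1)/15)·((q+1)/w); if 5 | q+1 and 5 ∤ w, then N = 1 + (q−4)/60 + (q/4)·((q−1)/3)·((q+1)/(5w)); if 5 | w, then N = 1 + (q−4)/60 + ((q+1)/w)·(1 + (q²−q−12)/60). -/

import Mathlib

/-!
The orbits are counted with Burnside's lemma for the group `S × E`, where `E` is the group of scalars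
`ε` with `diag(ε, ε, 1) ∈ L ∩ Z` (`sum_fixed_eq_numOrbits`, `numOrbits_mul`).

The elements of `S ≅ A₅` are products of two involutions, so they have determinant one in
characteristic two: they are `[a, c, 1]` with `a ^ (q + 1) + c ^ (q + 1) = 1`
(`alternating_subgroup_form`). By Cayley–Hamilton, the order of such an element determines its trace
`T = a ^ q + a`: `T = 0` for order 2, `T = 1` for order 3 and `T² + T + 1 = 0` for order 5.

The fixed points of `[a, c, 1] * diag(ε, ε, 1)` on the curve are of two kinds. Those on the line `Z = 0`
(`infFix`) are the isotropic eigenvectors of the 2 × 2 block up to scalars; those off it (`affFix`) are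
the eigenvectors of Hermitian norm one with eigenvalue `ε⁻¹`. Let `λ, λ⁻¹` be the roots of
`X² + T X + 1`.
* For the identity there are `q + 1` points on the line for each `ε`, and `q³ - q` points off it when
  `ε = 1`.
* For order 2 there is exactly one fixed point, on the line, for each `ε`.
* If `λ ∈ 𝔽_q` is not `1`, there are exactly two, both on the line, for each `ε`. This covers order 3,
  and order 5 when `5 ∣ q - 1`.
* If `λ ≠ 1` has norm one (order 5, `5 ∣ q + 1`), there are none on the line, and `q + 1` off it
  exactly for `ε = λ` and `ε = λ⁻¹`. These are fifth roots of unity, which lie in `E` if and only if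
  `5 ∣ w`.

Summing with the 1, 15, 20, 24 elements of `A₅` of orders 1, 2, 3, 5 gives the three formulas.
-/


open Matrix

noncomputable def glAct {F : Type*} [Field F] (M : GL (Fin 3) F)
    (x : Projectivization F (Fin 3 → F)) : Projectivization F (Fin 3 → F) :=
  Projectivization.map
    ((LinearMap.GeneralLinearGroup.generalLinearEquiv F (Fin 3 → F)
        (Matrix.GeneralLinearGroup.toLin M)).toLinearMap)
    ((LinearMap.GeneralLinearGroup.generalLinearEquiv F (Fin 3 → F)
        (Matrix.GeneralLinearGroup.toLin M)).injective) x

noncomputable def numOrbits {F : Type*} [Field F] (L : Subgroup (GL (Fin 3) F))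
    (O : Set (Projectivization F (Fin 3 → F))) : ℕ :=
  Nat.card ((fun x => {y | ∃ g ∈ L, glAct g x = y}) '' O :
    Set (Set (Projectivization F (Fin 3 → F))))

def hermitianPts (q : ℕ) (F : Type*) [Field F] : Set (Projectivization F (Fin 3 → F)) :=
  {x | x.rep 1 ^ (q + 1) = x.rep 0 ^ (q + 1) - x.rep 2 ^ (q + 1)}

def MlSet (q : ℕ) (F : Type*) [Field F] : Set (GL (Fin 3) F) :=
  {M | ∃ a c τ : F, a ^ (q + 1) - c ^ (q + 1) = 1 ∧ τ ^ (q + 1) = 1 ∧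
    (M : Matrix (Fin 3) (Fin 3) F) = !![a, τ * c ^ q, 0; c, τ * a ^ q, 0; 0, 0, 1]}

def ZSet (q : ℕ) (F : Type*) [Field F] : Set (GL (Fin 3) F) :=
  {M | ∃ ε : F, ε ^ (q + 1) = 1 ∧ (M : Matrix (Fin 3) (Fin 3) F) = Matrix.diagonal ![ε, ε, 1]}


/-! ### Arithmetic of the field with `q²` elements -/

section Arith
variable {F : Type*} [Field F] [Fintype F] {h q : ℕ}

lemma two_eq_zero_of_card (hh : 1 ≤ h) (hq : q = 2 ^ h) (hF : Fintype.card F = q ^ 2) :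
    (2 : F) = 0 := by
  have h0 := FiniteField.cast_card_eq_zero F
  rw [hF, hq] at h0
  push_cast at h0
  exact pow_eq_zero_iff (by omega) |>.1 (pow_eq_zero_iff (by omega) |>.1 h0)

lemma frob_add {F : Type*} [Field F] {h q : ℕ} (hq : q = 2 ^ h) (h2 : (2 : F) = 0) (x y : F) :
    (x + y) ^ q = x ^ q + y ^ q := by
  have : CharP F 2 := CharTwo.of_one_ne_zero_of_two_eq_zero one_ne_zero h2
  rw [hq]; exact add_pow_char_pow x y 2 h

lemma frob_frob (hF : Fintype.card F = q ^ 2) (x : F) : (x ^ q) ^ q = x := by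
  rw [← pow_mul, ← sq, ← hF]; exact FiniteField.pow_card x

lemma card_norm_eq (hq : 1 < q) (hF : Fintype.card F = q ^ 2) {c : F} (hc : c ≠ 0)
    (hcq : c ^ q = c) : Nat.card {x : F // x ^ (q + 1) = c} = q + 1 := by
  classical
  obtain ⟨g, hg⟩ := IsCyclic.exists_generator (α := Fˣ)
  have hord : orderOf g = (q - 1) * (q + 1) := by
    rw [orderOf_eq_card_of_forall_mem_zpowers hg, Nat.card_units, Nat.card_eq_fintype_card, hF]
    obtain ⟨m, rfl⟩ : ∃ m, q = m + 1 := ⟨q - 1, by omega⟩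
    simp; ring_nf; omega
  have hcard : Nat.card Fˣ = (q - 1) * (q + 1) := by
    rw [← hord, orderOf_eq_card_of_forall_mem_zpowers hg]
  -- as `c ^ (q - 1) = 1`, the exponent `k` of `c` is divisible by `q + 1`: `c` is a norm
  obtain ⟨k, hk⟩ := (isOfFinOrder_of_finite g).mem_powers_iff_mem_zpowers.2 (hg (Units.mk0 c hc))
  have hk' : g ^ k = Units.mk0 c hc := hk
  have hc1 : (Units.mk0 c hc) ^ (q - 1) = 1 := by
    have : (Units.mk0 c hc) ^ (q - 1) * Units.mk0 c hc = 1 * Units.mk0 c hc := by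
      rw [← pow_succ, Nat.sub_add_cancel hq.le]; ext; simp [hcq]
    exact mul_right_cancel this
  have hdvd : (q + 1) ∣ k := by
    rw [← hk', ← pow_mul] at hc1
    have := orderOf_dvd_of_pow_eq_one hc1
    rw [hord, mul_comm k] at this
    exact Nat.dvd_of_mul_dvd_mul_left (by omega) this
  obtain ⟨j, rfl⟩ := hdvd
  have hx0 : (g ^ j) ^ (q + 1) = Units.mk0 c hc := by rw [← hk', ← pow_mul, mul_comm]
  have h1 : Nat.card {x : Fˣ // x ^ (q + 1) = 1} = q + 1 := by
    have := IsCyclic.card_powMonoidHom_ker Fˣ (q + 1)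
    rw [hcard, Nat.gcd_eq_right (Dvd.intro_left _ rfl)] at this
    exact this
  refine Eq.trans ?_ h1
  refine Nat.card_congr ⟨fun x => ⟨Units.mk0 x.1 ?_ * (g ^ j)⁻¹, ?_⟩,
    fun u => ⟨(u.1 * g ^ j : Fˣ), ?_⟩, ?_, ?_⟩
  · rintro h0
    have := x.2
    rw [h0, zero_pow (by omega)] at this
    exact hc this.symm
  · rw [mul_pow, inv_pow, hx0]
    ext; simp [x.2, hc]
  · rw [← Units.val_pow_eq_pow_val, mul_pow, hx0, u.2]; simp
  · intro x; ext; simp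
  · intro u; ext; simp


/-- The facts about `F = 𝔽_{q²}`, `q` even, on which the fixed point counts rest: `x ↦ x ^ q` is an
additive involution, and the norm `x ↦ x ^ (q + 1)` is `(q + 1)`-to-one onto the nonzero elements of
the subfield `𝔽_q = {c | c ^ q = c}`. -/
structure HermField (F : Type*) [Field F] (q : ℕ) : Prop where
  two : (2 : F) = 0
  q_pos : 0 < q
  add (x y : F) : (x + y) ^ q = x ^ q + y ^ q
  inv (x : F) : (x ^ q) ^ q = x
  card_norm (c : F) (hc : c ≠ 0) (hcq : c ^ q = c) : {x : F | x ^ (q + 1) = c}.ncard = q + 1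

lemma hermField_of_card (hh : 1 ≤ h) (hq : q = 2 ^ h) (hF : Fintype.card F = q ^ 2) :
    HermField F q where
  two := two_eq_zero_of_card hh hq hF
  q_pos := by rw [hq]; positivity
  add := frob_add hq (two_eq_zero_of_card hh hq hF)
  inv := frob_frob hF
  card_norm c hc hcq :=
    card_norm_eq (by rw [hq]; exact Nat.one_lt_two_pow (by omega)) hF hc hcq

end Arith


/-! ### Fixed points in coordinates -/

section Counts
variable {F : Type*} [Field F] {q : ℕ}

/-- The fixed points `(x : y : 1)` on the Hermitian curve of `[a, c, 1] * diag(ε, ε, 1)`, as pairs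
`(x, y)`. -/
def affFix (q : ℕ) (a c ε : F) : Set (F × F) :=
  {v | v.1 ^ (q + 1) + v.2 ^ (q + 1) = 1 ∧ ε * (a * v.1 + c ^ q * v.2) = v.1 ∧
    ε * (c * v.1 + a ^ q * v.2) = v.2}

/-- The fixed points `(1 : t : 0)` on the Hermitian curve of `[a, c, 1] * diag(ε, ε, 1)`; they do not
depend on `ε`. -/
def infFix (q : ℕ) (a c : F) : Set F :=
  {t | t ^ (q + 1) = 1 ∧ c + a ^ q * t = t * (a + c ^ q * t)}

lemma eq_of_sq_eq (h2 : (2 : F) = 0) {x y : F} (h : x ^ 2 = y ^ 2) : x = y := by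
  have : (x - y) ^ 2 = 0 := by grind
  exact sub_eq_zero.1 (pow_eq_zero_iff (by norm_num) |>.1 this)

lemma infFix_unipotent (H : HermField F q) [Finite F] {a c : F}
    (hT : a ^ q + a = 0) (hc : c ≠ 0) : (infFix q a c).ncard = 1 := by
  have h2 := H.two
  have hcq : c ^ q ≠ 0 := pow_ne_zero _ hc
  have hinj : Function.Injective (fun x : F => x ^ 2) := fun x y => eq_of_sq_eq h2
  obtain ⟨t, ht⟩ := (Finite.surjective_of_injective hinj) (c / c ^ q)
  simp only at ht
  rw [Set.ncard_eq_one]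
  refine ⟨t, Set.eq_singleton_iff_unique_mem.2 ⟨⟨?_, ?_⟩, ?_⟩⟩
  · apply eq_of_sq_eq h2
    rw [← pow_mul, mul_comm, pow_mul, ht, div_pow, pow_succ, pow_succ, H.inv]
    field_simp
  · field_simp at ht
    grind
  · rintro u ⟨hu, hu'⟩
    apply eq_of_sq_eq h2
    rw [ht, eq_div_iff hcq]
    grind

/-- A fixed point `(1 : t : 0)` spans an eigenvector whose eigenvalue `a + c ^ q * t` lies in the
subfield `𝔽_q` and is a root of the characteristic polynomial. -/
lemma eigenvalue_of_mem_infFix (H : HermField F q) {a c t : F}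
    (hd : a ^ (q + 1) + c ^ (q + 1) = 1) (ht : t ∈ infFix q a c) :
    (a + c ^ q * t) ^ q = a + c ^ q * t ∧
      (a + c ^ q * t) ^ 2 + (a ^ q + a) * (a + c ^ q * t) + 1 = 0 := by
  have h2 := H.two
  obtain ⟨h1, h3⟩ := ht
  rw [pow_succ] at h1 hd
  rw [pow_succ] at hd
  constructor
  · rw [H.add, mul_pow, H.inv]
    have : t ≠ 0 := by rintro rfl; simp at h1
    apply mul_right_cancel₀ this
    grind
  · grind

lemma infFix_split (H : HermField F q) {a c l : F}
    (hd : a ^ (q + 1) + c ^ (q + 1) = 1) (hT : a ^ q + a ≠ 0)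
    (hl : l ^ 2 + (a ^ q + a) * l + 1 = 0) (hlq : l ^ q = l) : (infFix q a c).ncard = 2 := by
  have h2 := H.two
  have hd' := hd
  rw [pow_succ, pow_succ] at hd'
  have hc : c ≠ 0 := by
    rintro rfl
    have : (a + l) ^ (q + 1) = 0 := by
      rw [pow_succ, H.add, hlq]
      grind
    have : a + l = 0 := pow_eq_zero_iff (by omega) |>.1 this
    have hal : a = l := by grind
    apply hT
    rw [hal, hlq]; grind
  have hcq : c ^ q ≠ 0 := pow_ne_zero _ hc
  have key : ∀ m : F, m ^ q = m → m ^ 2 + (a ^ q + a) * m + 1 = 0 →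
      (a + m) / c ^ q ∈ infFix q a c := by
    intro m hm hm2
    constructor
    · rw [div_pow, pow_succ, pow_succ, H.add, hm, H.inv]
      rw [div_eq_one_iff_eq (mul_ne_zero hc hcq)]
      grind
    · field_simp
      grind
  have hTq : (a ^ q + a) ^ q = a ^ q + a := by rw [H.add, H.inv, add_comm]
  rw [Set.ncard_eq_two]
  refine ⟨(a + l) / c ^ q, (a + (l + (a ^ q + a))) / c ^ q, ?_, ?_⟩
  · intro h
    rw [div_left_inj' hcq] at h
    apply hT; grind
  · ext t
    simp only [Set.mem_insert_iff, Set.mem_singleton_iff]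
    constructor
    · intro ht
      obtain ⟨-, he⟩ := eigenvalue_of_mem_infFix H hd ht
      rw [eq_div_iff hcq, eq_div_iff hcq]
      have : (t * c ^ q - (a + l)) * (t * c ^ q - (a + (l + (a ^ q + a)))) = 0 := by grind
      rcases mul_eq_zero.1 this with h | h
      · left; exact sub_eq_zero.1 h
      · right; exact sub_eq_zero.1 h
    · rintro (rfl | rfl)
      · exact key l hlq hl
      · exact key _ (by rw [H.add, hlq, hTq]) (by grind)

lemma infFix_nonsplit (H : HermField F q) {a c l : F}
    (hd : a ^ (q + 1) + c ^ (q + 1) = 1) (hT : a ^ q + a ≠ 0)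
    (hl : l ^ 2 + (a ^ q + a) * l + 1 = 0) (hlq : l ^ (q + 1) = 1) : infFix q a c = ∅ := by
  have h2 := H.two
  rw [Set.eq_empty_iff_forall_notMem]
  intro t ht
  obtain ⟨h1, he⟩ := eigenvalue_of_mem_infFix H hd ht
  set u := a + c ^ q * t
  have hTq : (a ^ q + a) ^ q = a ^ q + a := by rw [H.add, H.inv, add_comm]
  rw [pow_succ] at hlq
  have hl0 : l ≠ 0 := by rintro rfl; simp at hlq
  have hll : l ^ q = l := by
    have : (u - l) * (u - (l + (a ^ q + a))) = 0 := by grind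
    rcases mul_eq_zero.1 this with h | h
    · rw [← sub_eq_zero.1 h, h1]
    · have : l = u + (a ^ q + a) := by grind
      rw [this, H.add, h1, hTq]
  rw [hll] at hlq
  exact hT (mul_right_cancel₀ hl0 (by grind))

lemma charpoly_of_mem_affFix (H : HermField F q) {a c e : F} {v : F × F}
    (hd : a ^ (q + 1) + c ^ (q + 1) = 1) (hv : v ∈ affFix q a c e) :
    e ^ 2 + (a ^ q + a) * e + 1 = 0 := by
  have h2 := H.two
  obtain ⟨h1, h3, h4⟩ := hv
  rw [pow_succ, pow_succ] at hd
  by_contra hne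
  have hx : v.1 = 0 := by
    apply mul_left_cancel₀ hne
    grind
  have hy : v.2 = 0 := by
    apply mul_left_cancel₀ hne
    grind
  simp [hx, hy] at h1

lemma affFix_unipotent (H : HermField F q) {a c e : F}
    (hd : a ^ (q + 1) + c ^ (q + 1) = 1)
    (hT : a ^ q + a = 0) (hc : c ≠ 0) : affFix q a c e = ∅ := by
  have h2 := H.two
  rw [Set.eq_empty_iff_forall_notMem]
  intro v hv
  have he := charpoly_of_mem_affFix H hd hv
  have he1 : e = 1 := eq_of_sq_eq h2 (by grind)
  obtain ⟨h1, h3, h4⟩ := hv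
  have haq : a ^ q = a := by grind
  have h5 : (a + 1) * v.1 = c ^ q * v.2 := by grind
  have h6 := congrArg (· ^ (q + 1)) h5
  simp only [mul_pow, pow_succ _ q, H.add, H.inv, haq, one_pow] at h6
  rw [pow_succ, pow_succ] at h1 hd
  have : c * c ^ q ≠ 0 := mul_ne_zero hc (pow_ne_zero _ hc)
  apply this
  grind

lemma affFix_split (H : HermField F q) {a c l e : F}
    (hd : a ^ (q + 1) + c ^ (q + 1) = 1) (hT : a ^ q + a ≠ 0)
    (hl : l ^ 2 + (a ^ q + a) * l + 1 = 0) (hlq : l ^ q = l) (he : e ^ (q + 1) = 1) :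
    affFix q a c e = ∅ := by
  have h2 := H.two
  rw [Set.eq_empty_iff_forall_notMem]
  intro v hv
  have h1 := charpoly_of_mem_affFix H hd hv
  have hTq : (a ^ q + a) ^ q = a ^ q + a := by rw [H.add, H.inv, add_comm]
  rw [pow_succ] at he
  have he0 : e ≠ 0 := by rintro rfl; simp at he
  have hll : e ^ q = e := by
    have : (l - e) * (l - (e + (a ^ q + a))) = 0 := by grind
    rcases mul_eq_zero.1 this with h | h
    · rw [← sub_eq_zero.1 h, hlq]
    · have : e = l + (a ^ q + a) := by grind
      rw [this, H.add, hlq, hTq]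
  rw [hll] at he
  exact hT (mul_right_cancel₀ he0 (by grind))

/-- The eigenspace for an eigenvalue of norm one is an anisotropic line `F v`, because an isotropic
eigenvector would give a fixed point `(1 : t : 0)`. The points `k v` of Hermitian norm one are then the
solutions of a norm equation for `k`. -/
lemma affFix_nonsplit (H : HermField F q) {a c e : F}
    (hd : a ^ (q + 1) + c ^ (q + 1) = 1) (hT : a ^ q + a ≠ 0)
    (he : e ^ 2 + (a ^ q + a) * e + 1 = 0) (heq : e ^ (q + 1) = 1) :
    (affFix q a c e).ncard = q + 1 := by
  have h2 := H.two
  have hinf := infFix_nonsplit H hd hT he heq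
  have he0 : e ≠ 0 := by rintro rfl; simp at heq
  have hd' := hd
  rw [pow_succ, pow_succ] at hd'
  obtain ⟨x, y, hxy, h3, h4⟩ : ∃ x y : F, (x ≠ 0 ∨ y ≠ 0) ∧ e * (a * x + c ^ q * y) = x ∧
      e * (c * x + a ^ q * y) = y := by
    by_cases hz : c = 0 ∧ e * a = 1
    · exact ⟨1, 0, by simp, by grind, by grind⟩
    · by_cases hc : c = 0
      · subst hc
        refine ⟨0, 1, by simp, by simp [H.q_pos.ne'], ?_⟩
        have : e * a - 1 ≠ 0 := fun h => hz ⟨rfl, by grind⟩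
        apply mul_left_cancel₀ this
        grind
      · refine ⟨e * c ^ q, e * a + 1, Or.inl (mul_ne_zero he0 (pow_ne_zero _ hc)), ?_, ?_⟩ <;> grind
  have hN : x ^ (q + 1) + y ^ (q + 1) ≠ 0 := by
    intro h0
    have hx : x ≠ 0 := by
      rintro rfl
      rw [zero_pow (by omega), zero_add] at h0
      have := pow_eq_zero_iff (by omega) |>.1 h0
      simp_all
    have : y / x ∈ infFix q a c := by
      constructor
      · rw [div_pow, div_eq_one_iff_eq (pow_ne_zero _ hx)]; grind
      · field_simp
        apply mul_left_cancel₀ he0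
        grind
    rw [hinf] at this
    exact this
  set n := x ^ (q + 1) + y ^ (q + 1) with hn
  have hnq : n ^ q = n := by
    rw [hn, H.add, pow_succ, pow_succ, mul_pow, mul_pow, H.inv, H.inv]; ring
  rw [← H.card_norm n⁻¹ (inv_ne_zero hN) (by rw [inv_pow, hnq])]
  symm
  apply Set.ncard_congr (fun k _ => (k * x, k * y))
  · intro k hk
    have hk' : k ^ (q + 1) = n⁻¹ := hk
    refine ⟨?_, ?_, ?_⟩
    · simp only [mul_pow]
      rw [← mul_add, ← hn, hk', inv_mul_cancel₀ hN]
    · simp only; grind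
    · simp only; grind
  · intro k k' _ _ hkk
    simp only [Prod.mk.injEq] at hkk
    rcases hxy with h | h
    · exact mul_right_cancel₀ h hkk.1
    · exact mul_right_cancel₀ h hkk.2
  · rintro ⟨x', y'⟩ ⟨h5, h6, h7⟩
    simp only at h5 h6 h7
    -- two independent eigenvectors would make the matrix scalar, hence of trace zero
    have hdet : x * y' - y * x' = 0 := by
      by_contra hne
      apply hT
      apply mul_left_cancel₀ (mul_ne_zero he0 hne)
      have e1 : e * a * (x * y' - y * x') = x * y' - y * x' := by grind
      have e2 : e * a ^ q * (x * y' - y * x') = x * y' - y * x' := by grind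
      grind
    obtain ⟨k, hk1, hk2⟩ : ∃ k, k * x = x' ∧ k * y = y' := by
      rcases hxy with h | h
      · refine ⟨x' / x, by field_simp, ?_⟩
        field_simp; grind
      · refine ⟨y' / y, ?_, by field_simp⟩
        field_simp; grind
    refine ⟨k, ?_, by rw [hk1, hk2]⟩
    rw [← hk1, ← hk2, mul_pow, mul_pow, ← mul_add, ← hn] at h5
    exact eq_inv_of_mul_eq_one_left h5

lemma infFix_one (H : HermField F q) : (infFix q (1 : F) 0).ncard = q + 1 := by
  rw [← H.card_norm 1 one_ne_zero (one_pow _)]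
  congr 1
  ext t
  simp [infFix, H.q_pos.ne']

lemma affFix_scalar (H : HermField F q) {e : F} (he : e ≠ 1) : affFix q (1 : F) 0 e = ∅ := by
  rw [Set.eq_empty_iff_forall_notMem]
  rintro ⟨x, y⟩ ⟨h1, h3, h4⟩
  simp only [one_mul, one_pow, zero_mul, zero_pow H.q_pos.ne', zero_add, add_zero] at h1 h3 h4
  have he' : e - 1 ≠ 0 := sub_ne_zero.2 he
  have hx : x = 0 := mul_left_cancel₀ he' (by grind)
  have hy : y = 0 := mul_left_cancel₀ he' (by grind)
  simp [hx, hy] at h1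

lemma affFix_one [Fintype F] (H : HermField F q) (hF : Fintype.card F = q ^ 2) :
    (affFix q (1 : F) 0 1).ncard + q = q ^ 3 := by
  classical
  have h2 := H.two
  have hq := H.q_pos
  let f : F → ℕ := fun y => {x : F | x ^ (q + 1) = 1 + y ^ (q + 1)}.ncard
  have h1 : (affFix q (1 : F) 0 1).ncard = ∑ y, f y := by
    have e : ↥(affFix q (1 : F) 0 1) ≃ (Σ y : F, {x : F | x ^ (q + 1) = 1 + y ^ (q + 1)}) :=
      { toFun := fun v => ⟨v.1.2, v.1.1, by have := v.2.1; simp only [Set.mem_ofPred_eq]; grind⟩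
        invFun := fun z => ⟨(z.2.1, z.1), by
          have := z.2.2
          simp only [Set.mem_ofPred_eq] at this
          refine ⟨by grind, ?_, ?_⟩ <;> simp [hq.ne']⟩
        left_inv := fun v => rfl
        right_inv := fun z => rfl }
    rw [← Nat.card_coe_set_eq, Nat.card_congr e, Nat.card_sigma]
    rfl
  have h3 : ∀ y, f y = if y ^ (q + 1) = 1 then 1 else q + 1 := by
    intro y
    split_ifs with hy
    · have : {x : F | x ^ (q + 1) = 1 + y ^ (q + 1)} = {0} := by
        ext x
        simp only [Set.mem_ofPred_eq, Set.mem_singleton_iff, hy]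
        constructor
        · intro h
          exact pow_eq_zero_iff (n := q + 1) (by omega) |>.1 (by grind)
        · rintro rfl
          rw [zero_pow (by omega)]; grind
      simp only [f, this, Set.ncard_singleton]
    · apply H.card_norm
      · intro h; apply hy; grind
      · rw [H.add, pow_succ, mul_pow, H.inv]; ring
  have h4 : (Finset.univ.filter fun y : F => y ^ (q + 1) = 1).card = q + 1 := by
    have := H.card_norm 1 one_ne_zero (one_pow _)
    rw [← Set.ncard_coe_finset, Finset.coe_filter_univ]
    exact this
  have h5 := Finset.card_filter_add_card_filter_not (s := Finset.univ)
    (fun y : F => y ^ (q + 1) = 1)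
  rw [Finset.card_univ, hF, h4] at h5
  rw [h1, Finset.sum_congr rfl fun y _ => h3 y, Finset.sum_ite]
  simp only [Finset.sum_const, smul_eq_mul, h4]
  set m := (Finset.univ.filter fun y : F => ¬ y ^ (q + 1) = 1).card
  nlinarith

end Counts

/-! ### The projective action -/

section Action
variable {F : Type*} [Field F] {q : ℕ}

open Projectivization

lemma mk_mem_hermitianPts (v : Fin 3 → F) (hv : v ≠ 0) :
    Projectivization.mk F v hv ∈ hermitianPts q F ↔
      v 1 ^ (q + 1) = v 0 ^ (q + 1) - v 2 ^ (q + 1) := by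
  obtain ⟨k, hk⟩ := exists_smul_eq_mk_rep F v hv
  have hk0 : (k : F) ^ (q + 1) ≠ 0 := pow_ne_zero _ k.ne_zero
  simp only [hermitianPts, Set.mem_ofPred_eq, ← hk, Pi.smul_apply, Units.smul_def, smul_eq_mul,
    mul_pow, ← mul_sub]
  exact mul_right_inj' hk0

lemma mulVec_ne_zero_GL (M : GL (Fin 3) F) {v : Fin 3 → F} (hv : v ≠ 0) :
    (M : Matrix (Fin 3) (Fin 3) F) *ᵥ v ≠ 0 := by
  intro h
  apply hv
  have := congrArg (fun u => ((M⁻¹ : GL (Fin 3) F) : Matrix (Fin 3) (Fin 3) F) *ᵥ u) h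
  simpa only [Matrix.mulVec_mulVec, ← Units.val_mul, inv_mul_cancel, Units.val_one,
    Matrix.one_mulVec, Matrix.mulVec_zero] using this

lemma glAct_mk (M : GL (Fin 3) F) (v : Fin 3 → F) (hv : v ≠ 0) :
    glAct M (Projectivization.mk F v hv) =
      Projectivization.mk F ((M : Matrix (Fin 3) (Fin 3) F) *ᵥ v) (mulVec_ne_zero_GL M hv) := by
  unfold glAct
  rw [Projectivization.map_mk]
  rfl

lemma glAct_one (x : Projectivization F (Fin 3 → F)) : glAct 1 x = x := by
  induction x using Projectivization.ind with
  | h v hv => simp [glAct_mk]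

lemma glAct_mul (M N : GL (Fin 3) F) (x : Projectivization F (Fin 3 → F)) :
    glAct (M * N) x = glAct M (glAct N x) := by
  induction x using Projectivization.ind with
  | h v hv => simp [glAct_mk, Matrix.mulVec_mulVec]

/-- Burnside's lemma for a group acting on `O` through a (not necessarily injective) homomorphism
to `GL(3, F)`. -/
lemma sum_fixed_eq_numOrbits [Finite F] {G : Type*} [Group G] [Fintype G] (φ : G →* GL (Fin 3) F)
    (O : Set (Projectivization F (Fin 3 → F))) (hO : ∀ g, ∀ x ∈ O, glAct (φ g) x ∈ O) :
    ∑ g, {x | x ∈ O ∧ glAct (φ g) x = x}.ncard = numOrbits φ.range O * Fintype.card G := by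
  classical
  let act : MulAction G O :=
    { smul := fun g x => ⟨glAct (φ g) x.1, hO g x.1 x.2⟩
      one_smul := fun x => Subtype.ext (by
        change glAct (φ 1) x.1 = x.1
        rw [map_one, glAct_one])
      mul_smul := fun g k x => Subtype.ext (by
        change glAct (φ (g * k)) x.1 = glAct (φ g) (glAct (φ k) x.1)
        rw [map_mul, glAct_mul]) }
  have : Finite (Projectivization F (Fin 3 → F)) := inferInstance
  have : Fintype O := Fintype.ofFinite _
  have hsmul : ∀ (g : G) (x : O), (g • x).1 = glAct (φ g) x.1 := fun g x => rfl
  have hB := MulAction.sum_card_fixedBy_eq_card_orbits_mul_card_group G O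
  rw [Finset.sum_congr rfl (g := fun g => {x | x ∈ O ∧ glAct (φ g) x = x}.ncard)] at hB
  · rw [hB]
    congr 1
    rw [← Nat.card_eq_fintype_card]
    unfold numOrbits
    rw [Set.image_eq_range]
    let f : O → Set (Projectivization F (Fin 3 → F)) :=
      fun x => {y | ∃ g ∈ φ.range, glAct g x.1 = y}
    have hker : MulAction.orbitRel G O = Setoid.ker f := by
      ext x y
      rw [MulAction.orbitRel_apply, Setoid.ker_def]
      constructor
      · rintro ⟨g, rfl⟩
        ext z
        constructor
        · rintro ⟨_, ⟨k, rfl⟩, hz⟩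
          refine ⟨_, ⟨k * g, rfl⟩, ?_⟩
          rw [map_mul, glAct_mul]; exact hz
        · rintro ⟨_, ⟨k, rfl⟩, hz⟩
          refine ⟨_, ⟨k * g⁻¹, rfl⟩, ?_⟩
          simp only [hsmul]
          rw [← glAct_mul, ← map_mul, inv_mul_cancel_right]; exact hz
      · intro h
        have : x.1 ∈ f x := ⟨1, one_mem _, glAct_one _⟩
        rw [h] at this
        obtain ⟨_, ⟨k, rfl⟩, hz⟩ := this
        exact ⟨k, Subtype.ext hz⟩
    rw [hker]
    exact Nat.card_congr (Setoid.quotientKerEquivRange f)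
  · intro g _
    rw [← Nat.card_eq_fintype_card, ← Nat.card_coe_set_eq]
    exact Nat.card_congr
      { toFun := fun x => ⟨x.1.1, x.1.2, congrArg Subtype.val x.2⟩
        invFun := fun x => ⟨⟨x.1, x.2.1⟩, Subtype.ext x.2.2⟩
        left_inv := fun x => rfl
        right_inv := fun x => rfl }

/-- The homomorphism `ε ↦ diag(ε, ε, 1)`. -/
def diagHom (F : Type*) [Field F] : Fˣ →* GL (Fin 3) F :=
  Units.map
    { toFun := fun e : F => Matrix.diagonal ![e, e, 1]
      map_one' := by
        ext i j; fin_cases i <;> fin_cases j <;> simp [Matrix.diagonal]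
      map_mul' := fun x y => by
        rw [Matrix.diagonal_mul_diagonal]
        congr 1
        ext i; fin_cases i <;> simp }

lemma diagHom_val (e : Fˣ) :
    ((diagHom F e : GL (Fin 3) F) : Matrix (Fin 3) (Fin 3) F) = Matrix.diagonal ![(e : F), e, 1] :=
  rfl

lemma mulVec_block {M : GL (Fin 3) F} {a b c d : F}
    (hM : (M : Matrix (Fin 3) (Fin 3) F) = !![a, b, 0; c, d, 0; 0, 0, 1]) (e : Fˣ)
    (v : Fin 3 → F) :
    ((M * diagHom F e : GL (Fin 3) F) : Matrix (Fin 3) (Fin 3) F) *ᵥ v =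
      ![e * (a * v 0 + b * v 1), e * (c * v 0 + d * v 1), v 2] := by
  rw [Units.val_mul, hM, diagHom_val, ← Matrix.mulVec_mulVec]
  ext i
  fin_cases i <;>
    simp [Matrix.mulVec, dotProduct, Fin.sum_univ_three] <;> ring

lemma ne_zero_aff (x y : F) : (![x, y, 1] : Fin 3 → F) ≠ 0 := fun h => by
  simpa using congrFun h 2

lemma ne_zero_inf (t : F) : (![1, t, 0] : Fin 3 → F) ≠ 0 := fun h => by
  simpa using congrFun h 0

lemma glAct_block_mem (H : HermField F q) {M : GL (Fin 3) F} {a c : F}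
    (hd : a ^ (q + 1) + c ^ (q + 1) = 1)
    (hM : (M : Matrix (Fin 3) (Fin 3) F) = !![a, c ^ q, 0; c, a ^ q, 0; 0, 0, 1]) (e : Fˣ)
    (he : (e : F) ^ (q + 1) = 1) (x : Projectivization F (Fin 3 → F))
    (hx : x ∈ hermitianPts q F) : glAct (M * diagHom F e) x ∈ hermitianPts q F := by
  have h2 := H.two
  induction x using Projectivization.ind with
  | h v hv =>
    rw [mk_mem_hermitianPts] at hx
    rw [glAct_mk, mk_mem_hermitianPts, mulVec_block hM]
    simp only [Matrix.cons_val_zero, Matrix.cons_val_one, Matrix.cons_val]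
    simp only [mul_pow _ _ (q + 1), he, one_mul]
    simp only [pow_succ _ q, H.add, mul_pow, H.inv] at hx hd ⊢
    grind

/-- The points of the Hermitian curve are the `(x : y : 1)` with `x ^ (q + 1) + y ^ (q + 1) = 1` and
the `(1 : t : 0)` with `t ^ (q + 1) = 1` (in characteristic two signs do not matter). -/
lemma ncard_fixed_eq [Finite F] (H : HermField F q) {M : GL (Fin 3) F} {a c : F}
    (hM : (M : Matrix (Fin 3) (Fin 3) F) = !![a, c ^ q, 0; c, a ^ q, 0; 0, 0, 1]) (e : Fˣ) :
    {x | x ∈ hermitianPts q F ∧ glAct (M * diagHom F e) x = x}.ncard =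
      (affFix q a c e).ncard + (infFix q a c).ncard := by
  have h2 := H.two
  let f₁ : F × F → Projectivization F (Fin 3 → F) :=
    fun v => Projectivization.mk F ![v.1, v.2, 1] (ne_zero_aff _ _)
  let f₂ : F → Projectivization F (Fin 3 → F) :=
    fun t => Projectivization.mk F ![1, t, 0] (ne_zero_inf _)
  have hf₁ : Function.Injective f₁ := by
    rintro ⟨x, y⟩ ⟨x', y'⟩ h
    obtain ⟨k, hk⟩ := (Projectivization.mk_eq_mk_iff' F _ _ _ _).1 h
    have e0 := congrFun hk 0
    have e1 := congrFun hk 1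
    have e2 := congrFun hk 2
    simp at e0 e1 e2
    subst e2
    simp [← e0, ← e1]
  have hf₂ : Function.Injective f₂ := by
    intro t t' h
    obtain ⟨k, hk⟩ := (Projectivization.mk_eq_mk_iff' F _ _ _ _).1 h
    have e0 := congrFun hk 0
    have e1 := congrFun hk 1
    simp at e0 e1
    subst e0
    simpa using e1.symm
  have hset : {x | x ∈ hermitianPts q F ∧ glAct (M * diagHom F e) x = x} =
      f₁ '' affFix q a c e ∪ f₂ '' infFix q a c := by
    apply Set.Subset.antisymm
    · rintro x ⟨hx, hfix⟩
      induction x using Projectivization.ind with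
      | h v hv =>
        by_cases hz : v 2 = 0
        · right
          have hv0 : v 0 ≠ 0 := by
            intro h0
            rw [mk_mem_hermitianPts, h0, hz] at hx
            simp at hx
            apply hv
            ext i; fin_cases i <;> simp [*]
          have heq : Projectivization.mk F v hv = f₂ (v 1 / v 0) := by
            apply (Projectivization.mk_eq_mk_iff' F _ _ _ _).2
            refine ⟨v 0, ?_⟩
            ext i; fin_cases i <;> simp [hz]; field_simp
          rw [heq] at hx hfix ⊢
          refine ⟨_, ?_, rfl⟩
          generalize v 1 / v 0 = t at hx hfix
          simp only [f₂] at hx hfix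
          rw [mk_mem_hermitianPts] at hx
          rw [glAct_mk] at hfix
          obtain ⟨k, hk⟩ := (Projectivization.mk_eq_mk_iff' F _ _ _ _).1 hfix
          rw [mulVec_block hM] at hk
          have e0 := congrFun hk 0
          have e1 := congrFun hk 1
          simp at e0 e1 hx
          refine ⟨hx, ?_⟩
          rw [e0] at e1
          apply mul_left_cancel₀ e.ne_zero
          rw [← e1]; ring
        · left
          have heq : Projectivization.mk F v hv = f₁ (v 0 / v 2, v 1 / v 2) := by
            apply (Projectivization.mk_eq_mk_iff' F _ _ _ _).2
            refine ⟨v 2, ?_⟩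
            ext i; fin_cases i <;> simp <;> field_simp
          rw [heq] at hx hfix ⊢
          refine ⟨_, ?_, rfl⟩
          generalize v 0 / v 2 = x at hx hfix
          generalize v 1 / v 2 = y at hx hfix
          simp only [f₁] at hx hfix
          rw [mk_mem_hermitianPts] at hx
          rw [glAct_mk] at hfix
          obtain ⟨k, hk⟩ := (Projectivization.mk_eq_mk_iff' F _ _ _ _).1 hfix
          rw [mulVec_block hM] at hk
          have e0 := congrFun hk 0
          have e1 := congrFun hk 1
          have e2 := congrFun hk 2
          simp at e0 e1 e2 hx
          subst e2
          refine ⟨?_, ?_, ?_⟩ <;> simp only <;> grind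
    · rintro x (⟨⟨x, y⟩, ⟨h1, h3, h4⟩, rfl⟩ | ⟨t, ⟨h1, h3⟩, rfl⟩)
      · simp only at h1 h3 h4
        refine ⟨?_, ?_⟩
        · rw [mk_mem_hermitianPts]; simp; grind
        · rw [glAct_mk, Projectivization.mk_eq_mk_iff']
          refine ⟨1, ?_⟩
          rw [mulVec_block hM]
          ext i; fin_cases i <;> simp [h3, h4]
      · refine ⟨?_, ?_⟩
        · rw [mk_mem_hermitianPts]; simp [h1]
        · rw [glAct_mk, Projectivization.mk_eq_mk_iff']
          refine ⟨e * (a + c ^ q * t), ?_⟩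
          rw [mulVec_block hM]
          ext i; fin_cases i <;> simp
          rw [h3]; ring
  have hdisj : Disjoint (f₁ '' affFix q a c e) (f₂ '' infFix q a c) := by
    rw [Set.disjoint_left]
    rintro _ ⟨v, -, rfl⟩ ⟨t, -, h⟩
    obtain ⟨k, hk⟩ := (Projectivization.mk_eq_mk_iff' F _ _ _ _).1 h
    have e0 := congrFun hk 0
    have e2 := congrFun hk 2
    simp at e0 e2
    simp [e2] at e0
  rw [hset, Set.ncard_union_eq hdisj (Set.toFinite _) (Set.toFinite _),
    Set.ncard_image_of_injective _ hf₁, Set.ncard_image_of_injective _ hf₂]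

end Action

/-! ### The alternating group and unimodular blocks -/

section Group
variable {F : Type*} [Field F] {q : ℕ}

set_option maxRecDepth 100000 in
lemma alternating_five_pow (p : alternatingGroup (Fin 5)) : p ^ 2 = 1 ∨ p ^ 3 = 1 ∨ p ^ 5 = 1 := by
  revert p; decide +kernel

set_option maxRecDepth 100000 in
lemma alternating_five_involutions (p : alternatingGroup (Fin 5)) :
    ∃ a : alternatingGroup (Fin 5), a ^ 2 = 1 ∧ (p * a) ^ 2 = 1 := by
  revert p; decide +kernel

/-- Besides the identity, `A₅` has 15 elements of order 2, 20 of order 3 and 24 of order 5. -/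
lemma sum_alternating_five (A B C D : ℕ) :
    (∑ p : alternatingGroup (Fin 5),
      if p = 1 then A else if p ^ 2 = 1 then B else if p ^ 3 = 1 then C else D) =
      A + 15 * B + 20 * C + 24 * D := by
  rw [Finset.sum_ite, Finset.sum_ite, Finset.sum_ite]
  simp only [Finset.sum_const, smul_eq_mul, Finset.filter_filter]
  have h1 : (Finset.univ.filter fun p : alternatingGroup (Fin 5) => p = 1).card = 1 := by
    decide +kernel
  have h2 : (Finset.univ.filter fun p : alternatingGroup (Fin 5) =>
      ¬ p = 1 ∧ p ^ 2 = 1).card = 15 := by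
    decide +kernel
  have h3 : (Finset.univ.filter fun p : alternatingGroup (Fin 5) =>
      (¬ p = 1 ∧ ¬ p ^ 2 = 1) ∧ p ^ 3 = 1).card = 20 := by
    decide +kernel
  have h5 : (Finset.univ.filter fun p : alternatingGroup (Fin 5) =>
      (¬ p = 1 ∧ ¬ p ^ 2 = 1) ∧ ¬ p ^ 3 = 1).card = 24 := by
    decide +kernel
  rw [h1, h2, h3, h5]
  ring

/-- `block a b c d p r` is `p B + r` for `B = [[a, b], [c, d]]`, bordered by a trivial third row and
column. By Cayley–Hamilton the powers of a matrix of determinant one have this shape. -/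
def block (a b c d p r : F) : Matrix (Fin 3) (Fin 3) F :=
  !![p * a + r, p * b, 0; p * c, p * d + r, 0; 0, 0, 1]

lemma block_mul (h2 : (2 : F) = 0) {a b c d : F} (hd : d * a + b * c = 1) (p r : F) :
    block a b c d p r * block a b c d 1 0 = block a b c d (p * (d + a) + r) p := by
  unfold block
  ext i j
  fin_cases i <;> fin_cases j <;> simp [Matrix.mul_apply, Fin.sum_univ_three] <;> grind

/-- If a power of a non-identity matrix of determinant one is the identity, then the coefficient `p` in
its Cayley–Hamilton form vanishes; otherwise the matrix would be scalar, hence `1`. -/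
lemma block_coeff_eq_zero (h2 : (2 : F) = 0) {a b c d p r : F} (hd : d * a + b * c = 1)
    (hne : block a b c d 1 0 ≠ 1) (h : block a b c d p r = 1) : p = 0 := by
  by_contra hp
  have e0 := congrFun (congrFun h 0) 0
  have e1 := congrFun (congrFun h 0) 1
  have e2 := congrFun (congrFun h 1) 0
  have e3 := congrFun (congrFun h 1) 1
  simp [block, hp] at e0 e1 e2 e3
  have had : a = d := mul_left_cancel₀ hp (by grind)
  have ha : a = 1 := eq_of_sq_eq h2 (by grind)
  apply hne
  subst had e1 e2 ha
  ext i j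
  fin_cases i <;> fin_cases j <;> simp [block]

lemma block_pow_two (h2 : (2 : F) = 0) {a b c d : F} (hd : d * a + b * c = 1) :
    block a b c d 1 0 ^ 2 = block a b c d (d + a) 1 := by
  rw [sq, block_mul h2 hd]; ring_nf

lemma block_pow_three (h2 : (2 : F) = 0) {a b c d : F} (hd : d * a + b * c = 1) :
    block a b c d 1 0 ^ 3 = block a b c d ((d + a) ^ 2 + 1) (d + a) := by
  rw [pow_succ, block_pow_two h2 hd, block_mul h2 hd]; ring_nf

lemma block_pow_five (h2 : (2 : F) = 0) {a b c d : F} (hd : d * a + b * c = 1) :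
    block a b c d 1 0 ^ 5 =
      block a b c d (((d + a) ^ 2 + (d + a) + 1) ^ 2) (((d + a) ^ 2 + 1) * (d + a) + (d + a)) := by
  rw [pow_succ, pow_succ, block_pow_three h2 hd, block_mul h2 hd, block_mul h2 hd]
  congr 1
  grind

/-- In characteristic two the sum `T = ζ + ζ⁻¹` over a primitive fifth root of unity satisfies
`T² + T + 1 = 0`, and the other root of that polynomial is `ζ² + ζ⁻²`. -/
lemma fifth_root_charpoly (h2 : (2 : F) = 0) {z T : F} (hz : z ^ 5 = 1) (hz1 : z ≠ 1)
    (hT : T ^ 2 + T + 1 = 0) :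
    z ^ 2 + T * z + 1 = 0 ∨ (z ^ 2) ^ 2 + T * z ^ 2 + 1 = 0 := by
  have h5 : z ^ 4 + z ^ 3 + z ^ 2 + z + 1 = 0 :=
    mul_left_cancel₀ (sub_ne_zero.2 hz1) (by grind)
  have : (z ^ 2 + T * z + 1) * (z ^ 2 + (T + 1) * z + 1) = 0 := by grind
  rcases mul_eq_zero.1 this with h | h
  · exact Or.inl h
  · right
    have h3 : (z ^ 2 + 1) ^ 2 = ((T + 1) * z) ^ 2 := by congr 1; grind
    grind

lemma exists_root_of_unity [Fintype F] (p : ℕ) [Fact p.Prime] (hF : Fintype.card F = q ^ 2)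
    (hp : p ∣ q - 1 ∨ p ∣ q + 1) : ∃ z : F, z ^ p = 1 ∧ z ≠ 1 := by
  classical
  have hdvd : p ∣ Nat.card Fˣ := by
    rw [Nat.card_units, Nat.card_eq_fintype_card, hF]
    have : q ^ 2 - 1 = (q + 1) * (q - 1) := by simpa using Nat.sq_sub_sq q 1
    rw [this]
    rcases hp with h | h
    · exact h.mul_left _
    · exact h.mul_right _
  obtain ⟨u, hu⟩ := exists_prime_orderOf_dvd_card' p hdvd
  refine ⟨u, ?_, ?_⟩
  · rw [← Units.val_pow_eq_pow_val, ← hu, pow_orderOf_eq_one]; rfl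
  · intro h
    have : u = 1 := Units.ext h
    rw [this, orderOf_one] at hu
    exact (Fact.out : p.Prime).one_lt.ne hu

lemma pow_q_of_dvd {p : ℕ} (hq : 0 < q) (hp : p ∣ q - 1) {z : F} (hz : z ^ p = 1) : z ^ q = z := by
  obtain ⟨k, hk⟩ := hp
  have : q = p * k + 1 := by omega
  rw [this, pow_succ, pow_mul, hz, one_pow, one_mul]

lemma pow_succ_q_of_dvd {p : ℕ} (hp : p ∣ q + 1) {z : F} (hz : z ^ p = 1) : z ^ (q + 1) = 1 := by
  obtain ⟨k, hk⟩ := hp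
  rw [hk, pow_mul, hz, one_pow]

/-- A subgroup of `M_ℓ` isomorphic to `A₅` has determinant one, that is `τ = 1`: every element is a
product of two involutions, and `x² = 1` forces `x = 1` in characteristic two. -/
lemma alternating_subgroup_form (H : HermField F q) (S : Subgroup (GL (Fin 3) F))
    (hS : (S : Set (GL (Fin 3) F)) ⊆ MlSet q F) (f : ↥S ≃* alternatingGroup (Fin 5)) (s : S) :
    ∃ a c : F, a ^ (q + 1) + c ^ (q + 1) = 1 ∧
      (s.1 : Matrix (Fin 3) (Fin 3) F) = !![a, c ^ q, 0; c, a ^ q, 0; 0, 0, 1] := by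
  have h2 := H.two
  have hinv : ∀ t : S, t ^ 2 = 1 → (t.1 : Matrix (Fin 3) (Fin 3) F).det = 1 := by
    intro t ht
    apply eq_of_sq_eq h2
    rw [← Matrix.det_pow, ← Units.val_pow_eq_pow_val, ← Subgroup.coe_pow, ht]
    simp
  obtain ⟨a, ha, hb⟩ := alternating_five_involutions (f s)
  have ha' : (f.symm a) ^ 2 = 1 := by rw [← map_pow, ha, map_one]
  have hb' : (s * f.symm a) ^ 2 = 1 := by
    apply f.injective; rw [map_pow, map_mul, f.apply_symm_apply, hb, map_one]
  have hdet : (s.1 : Matrix (Fin 3) (Fin 3) F).det = 1 := by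
    have := hinv _ hb'
    rwa [Subgroup.coe_mul, Units.val_mul, Matrix.det_mul, hinv _ ha', mul_one] at this
  obtain ⟨a, c, t, h1, -, hM⟩ := hS s.2
  rw [hM, Matrix.det_fin_three] at hdet
  simp at hdet
  rw [pow_succ, pow_succ] at h1
  have ht : t = 1 := by grind
  refine ⟨a, c, by rw [pow_succ, pow_succ]; grind, ?_⟩
  rw [hM, ht, one_mul, one_mul]

end Group

/-! ### Fixed points of a coset of the scalars -/

section Sums
variable {F : Type*} [Field F] {q : ℕ}

/-- The number of pairs of a scalar `ε ∈ E` and a point of the Hermitian curve fixed by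
`M * diag(ε, ε, 1)`. -/
noncomputable def fixSum (q : ℕ) (E : Subgroup Fˣ) [Fintype E] (M : GL (Fin 3) F) : ℕ :=
  ∑ e : E, {x | x ∈ hermitianPts q F ∧ glAct (M * diagHom F (e : Fˣ)) x = x}.ncard

variable [Fintype F] {M : GL (Fin 3) F} {a c : F}

lemma fixSum_eq (H : HermField F q) (E : Subgroup Fˣ) [Fintype E]
    (hM : (M : Matrix (Fin 3) (Fin 3) F) = !![a, c ^ q, 0; c, a ^ q, 0; 0, 0, 1]) :
    fixSum q E M = ∑ e : E, (affFix q a c ((e : Fˣ) : F)).ncard +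
      Fintype.card E * (infFix q a c).ncard := by
  unfold fixSum
  rw [Finset.sum_congr rfl fun (e : E) _ => ncard_fixed_eq H hM (e : Fˣ), Finset.sum_add_distrib]
  simp

lemma fixSum_one (H : HermField F q) (E : Subgroup Fˣ) [Fintype E]
    (hF : Fintype.card F = q ^ 2) :
    fixSum q E (1 : GL (Fin 3) F) + q = q ^ 3 + Fintype.card E * (q + 1) := by
  have h1 : ((1 : GL (Fin 3) F) : Matrix (Fin 3) (Fin 3) F) =
      !![(1 : F), (0 : F) ^ q, 0; 0, 1 ^ q, 0; 0, 0, 1] := by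
    rw [zero_pow H.q_pos.ne', one_pow]
    ext i j; fin_cases i <;> fin_cases j <;> simp
  rw [fixSum_eq H E h1, infFix_one H, Finset.sum_eq_single 1]
  · have := affFix_one H hF
    simp only [OneMemClass.coe_one, Units.val_one]
    omega
  · intro e _ he
    rw [affFix_scalar H, Set.ncard_empty]
    exact fun h => he (Subtype.ext (Units.ext h))
  · simp

lemma fixSum_order_two (H : HermField F q) (E : Subgroup Fˣ) [Fintype E]
    (hd : a ^ (q + 1) + c ^ (q + 1) = 1)
    (hM : (M : Matrix (Fin 3) (Fin 3) F) = !![a, c ^ q, 0; c, a ^ q, 0; 0, 0, 1])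
    (hT : a ^ q + a = 0) (hne : M ≠ 1) : fixSum q E M = Fintype.card E := by
  have h2 := H.two
  have hc : c ≠ 0 := by
    rintro rfl
    apply hne
    have ha : a = 1 := eq_of_sq_eq h2 (by
      rw [pow_succ, zero_pow (by omega)] at hd; grind)
    ext i j
    rw [hM, ha, zero_pow H.q_pos.ne', one_pow]
    fin_cases i <;> fin_cases j <;> simp
  rw [fixSum_eq H E hM, infFix_unipotent H hT hc, Finset.sum_eq_zero, zero_add, mul_one]
  intro e _
  rw [affFix_unipotent H hd hT hc, Set.ncard_empty]

lemma fixSum_split (H : HermField F q) (E : Subgroup Fˣ) [Fintype E]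
    (hE : ∀ e ∈ E, (e : F) ^ (q + 1) = 1) (hd : a ^ (q + 1) + c ^ (q + 1) = 1)
    (hM : (M : Matrix (Fin 3) (Fin 3) F) = !![a, c ^ q, 0; c, a ^ q, 0; 0, 0, 1])
    (hT : a ^ q + a ≠ 0) {l : F} (hl : l ^ 2 + (a ^ q + a) * l + 1 = 0) (hlq : l ^ q = l) :
    fixSum q E M = 2 * Fintype.card E := by
  rw [fixSum_eq H E hM, infFix_split H hd hT hl hlq, Finset.sum_eq_zero, zero_add, mul_comm]
  intro e _
  rw [affFix_split H hd hT hl hlq (hE _ e.2), Set.ncard_empty]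

lemma fixSum_nonsplit_of_no_root (H : HermField F q) (E : Subgroup Fˣ) [Fintype E]
    (hd : a ^ (q + 1) + c ^ (q + 1) = 1)
    (hM : (M : Matrix (Fin 3) (Fin 3) F) = !![a, c ^ q, 0; c, a ^ q, 0; 0, 0, 1])
    (hT : a ^ q + a ≠ 0) {l : F} (hl : l ^ 2 + (a ^ q + a) * l + 1 = 0) (hlq : l ^ (q + 1) = 1)
    (hno : ∀ e ∈ E, (e : F) ^ 2 + (a ^ q + a) * e + 1 ≠ 0) :
    fixSum q E M = 0 := by
  rw [fixSum_eq H E hM, infFix_nonsplit H hd hT hl hlq, Set.ncard_empty, mul_zero, add_zero]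
  apply Finset.sum_eq_zero
  intro e _
  have : affFix q a c ((e : Fˣ) : F) = ∅ := by
    rw [Set.eq_empty_iff_forall_notMem]
    exact fun v hv => hno _ e.2 (charpoly_of_mem_affFix H hd hv)
  rw [this, Set.ncard_empty]

lemma fixSum_nonsplit_of_root (H : HermField F q) (E : Subgroup Fˣ) [Fintype E]
    (hE : ∀ e ∈ E, (e : F) ^ (q + 1) = 1)
    (hd : a ^ (q + 1) + c ^ (q + 1) = 1)
    (hM : (M : Matrix (Fin 3) (Fin 3) F) = !![a, c ^ q, 0; c, a ^ q, 0; 0, 0, 1])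
    (hT : a ^ q + a ≠ 0) {l : Fˣ} (hlE : l ∈ E) (hl : (l : F) ^ 2 + (a ^ q + a) * l + 1 = 0) :
    fixSum q E M = 2 * (q + 1) := by
  classical
  have h2 := H.two
  rw [fixSum_eq H E hM, infFix_nonsplit H hd hT hl (hE _ hlE), Set.ncard_empty, mul_zero, add_zero]
  let L₀ : E := ⟨l, hlE⟩
  have hmul : (l : F) * ((l⁻¹ : Fˣ) : F) = 1 := by simp
  have hl0 : (l : F) ≠ 0 := l.ne_zero
  -- the two eigenvalues are `l` and its inverse `l + T`
  have hinv : ((l⁻¹ : Fˣ) : F) = l + (a ^ q + a) := mul_left_cancel₀ hl0 (by grind)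
  have hne : L₀ ≠ L₀⁻¹ := by
    intro h
    have : (l : F) = ((l⁻¹ : Fˣ) : F) := congrArg (fun e : E => ((e : Fˣ) : F)) h
    apply hT; grind
  have hval : ∀ e : E, (affFix q a c ((e : Fˣ) : F)).ncard =
      if e ∈ ({L₀, L₀⁻¹} : Finset E) then q + 1 else 0 := by
    intro e
    split_ifs with he
    · apply affFix_nonsplit H hd hT _ (hE _ e.2)
      rw [Finset.mem_insert, Finset.mem_singleton] at he
      rcases he with rfl | rfl
      · exact hl
      · change ((l⁻¹ : Fˣ) : F) ^ 2 + _ * ((l⁻¹ : Fˣ) : F) + 1 = 0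
        rw [hinv]; grind
    · have : affFix q a c ((e : Fˣ) : F) = ∅ := by
        rw [Set.eq_empty_iff_forall_notMem]
        intro v hv
        have h1 := charpoly_of_mem_affFix H hd hv
        apply he
        rw [Finset.mem_insert, Finset.mem_singleton]
        have : (((e : Fˣ) : F) - l) * (((e : Fˣ) : F) - ((l⁻¹ : Fˣ) : F)) = 0 := by
          rw [hinv]; grind
        rcases mul_eq_zero.1 this with h | h
        · exact Or.inl (Subtype.ext (Units.ext (sub_eq_zero.1 h)))
        · exact Or.inr (Subtype.ext (Units.ext (sub_eq_zero.1 h)))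
      rw [this, Set.ncard_empty]
  rw [Finset.sum_congr rfl fun e _ => hval e, Finset.sum_ite_mem, Finset.univ_inter,
    Finset.sum_const, Finset.card_pair hne, smul_eq_mul]

end Sums

/-! ### Burnside's lemma for `L = S × (L ∩ Z)` -/

section Main
variable {F : Type*} [Field F] {q : ℕ}

/-- The group of `ε` with `ε ^ (q + 1) = 1` and `diag(ε, ε, 1) ∈ L`, so that `L ∩ Z` is its image. -/
def scalarGroup (q : ℕ) (L : Subgroup (GL (Fin 3) F)) : Subgroup Fˣ :=
  L.comap (diagHom F) ⊓ (powMonoidHom (q + 1) : Fˣ →* Fˣ).ker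

lemma scalarGroup_pow (L : Subgroup (GL (Fin 3) F)) (e : Fˣ) (he : e ∈ scalarGroup q L) :
    (e : F) ^ (q + 1) = 1 := by
  have : e ^ (q + 1) = 1 := he.2
  rw [← Units.val_pow_eq_pow_val, this, Units.val_one]

lemma diagHom_injective : Function.Injective (diagHom F) := by
  intro x y h
  have h' := congrArg (fun M : GL (Fin 3) F => (M : Matrix (Fin 3) (Fin 3) F) 0 0) h
  simp only [diagHom_val] at h'
  exact Units.ext (by simpa using h')

lemma image_scalarGroup (L : Subgroup (GL (Fin 3) F)) :
    diagHom F '' (scalarGroup q L) = (L : Set (GL (Fin 3) F)) ∩ ZSet q F := by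
  ext M
  constructor
  · rintro ⟨e, he, rfl⟩
    exact ⟨he.1, e, scalarGroup_pow L e he, rfl⟩
  · rintro ⟨hM, e, he, hMe⟩
    have he0 : e ≠ 0 := by rintro rfl; simp at he
    have heq : diagHom F (Units.mk0 e he0) = M := Units.ext (by rw [hMe]; rfl)
    refine ⟨Units.mk0 e he0, ⟨?_, ?_⟩, heq⟩
    · change diagHom F (Units.mk0 e he0) ∈ L
      rw [heq]; exact hM
    · change Units.mk0 e he0 ^ (q + 1) = 1
      ext; simpa using he

lemma card_scalarGroup (L : Subgroup (GL (Fin 3) F)) :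
    Nat.card (scalarGroup q L) =
      Nat.card ((L : Set (GL (Fin 3) F)) ∩ ZSet q F : Set (GL (Fin 3) F)) := by
  rw [← image_scalarGroup, Nat.card_image_of_injective diagHom_injective]
  rfl

lemma commute_block_diagHom {M : GL (Fin 3) F} {a b c d : F}
    (hM : (M : Matrix (Fin 3) (Fin 3) F) = !![a, b, 0; c, d, 0; 0, 0, 1]) (e : Fˣ) :
    Commute M (diagHom F e) := by
  apply Units.ext
  rw [Units.val_mul, Units.val_mul, hM, diagHom_val]
  ext i j
  rw [Matrix.mul_diagonal, Matrix.diagonal_mul]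
  fin_cases i <;> fin_cases j <;> simp [mul_comm]

/-- Burnside's lemma for `L = S × (L ∩ Z)`, sorted by the order of the `A₅`-component. The hypothesis
`hD` supplies the contribution of the elements of order five. -/
lemma numOrbits_mul [Fintype F] (H : HermField F q) (hF : Fintype.card F = q ^ 2) (h3 : 3 ∣ q - 1)
    (L S : Subgroup (GL (Fin 3) F)) [Fintype (scalarGroup q L)]
    (hS : (S : Set (GL (Fin 3) F)) ⊆ MlSet q F) (f : ↥S ≃* alternatingGroup (Fin 5))
    (hgen : L = Subgroup.closure
      ((S : Set (GL (Fin 3) F)) ∪ ((L : Set (GL (Fin 3) F)) ∩ ZSet q F))) (D : ℕ)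
    (hD : ∀ (M : GL (Fin 3) F) (a c : F), a ^ (q + 1) + c ^ (q + 1) = 1 →
      (M : Matrix (Fin 3) (Fin 3) F) = !![a, c ^ q, 0; c, a ^ q, 0; 0, 0, 1] →
      (a ^ q + a) ^ 2 + (a ^ q + a) + 1 = 0 → fixSum q (scalarGroup q L) M = D) :
    numOrbits L (hermitianPts q F) * (60 * Fintype.card (scalarGroup q L)) + q =
      q ^ 3 + Fintype.card (scalarGroup q L) * (q + 1) + 15 * Fintype.card (scalarGroup q L) +
        20 * (2 * Fintype.card (scalarGroup q L)) + 24 * D := by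
  classical
  have h2 := H.two
  have hform := alternating_subgroup_form H S hS f
  have : Fintype S := Fintype.ofEquiv _ f.symm.toEquiv
  have hcardS : Fintype.card S = 60 := by
    rw [Fintype.card_congr f.toEquiv]; decide +kernel
  have hcomm : ∀ (s : S) (e : scalarGroup q L),
      Commute (S.subtype s) (((diagHom F).comp (scalarGroup q L).subtype) e) := by
    intro s e
    obtain ⟨a, c, -, hM⟩ := hform s
    exact commute_block_diagHom hM _
  let φ : S × scalarGroup q L →* GL (Fin 3) F :=
    S.subtype.noncommCoprod ((diagHom F).comp (scalarGroup q L).subtype) hcomm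
  have hφ : ∀ s e, φ (s, e) = s.1 * diagHom F e.1 := fun s e => rfl
  have hrange : φ.range = L := by
    rw [MonoidHom.noncommCoprod_range, Subgroup.range_subtype, MonoidHom.range_comp,
      Subgroup.range_subtype]
    conv_rhs => rw [hgen, Subgroup.closure_union, Subgroup.closure_eq, ← image_scalarGroup]
    rw [← Subgroup.coe_map, Subgroup.closure_eq]
  have hB := sum_fixed_eq_numOrbits φ (hermitianPts q F) (by
    rintro ⟨s, e⟩ x hx
    obtain ⟨a, c, hd, hM⟩ := hform s
    exact glAct_block_mem H hd hM _ (scalarGroup_pow L _ e.2) x hx)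
  rw [hrange, Fintype.card_prod, hcardS, Fintype.sum_prod_type] at hB
  have hsum : ∀ s : S, ∑ e, {x | x ∈ hermitianPts q F ∧ glAct (φ (s, e)) x = x}.ncard =
      fixSum q (scalarGroup q L) s.1 := fun s => rfl
  rw [Finset.sum_congr rfl fun s _ => hsum s] at hB
  have hval : ∀ s : S, fixSum q (scalarGroup q L) s.1 =
      if f s = 1 then fixSum q (scalarGroup q L) (1 : GL (Fin 3) F) else
      if f s ^ 2 = 1 then Fintype.card (scalarGroup q L) else
      if f s ^ 3 = 1 then 2 * Fintype.card (scalarGroup q L) else D := by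
    intro s
    by_cases hs1 : f s = 1
    · have : s = 1 := by simpa using hs1
      rw [if_pos hs1, this]; rfl
    rw [if_neg hs1]
    have hs1' : s.1 ≠ 1 := by
      intro h
      apply hs1
      have : s = 1 := Subtype.ext h
      rw [this, map_one]
    obtain ⟨a, c, hd, hM⟩ := hform s
    have hd' : a ^ q * a + c ^ q * c = 1 := by rwa [pow_succ, pow_succ] at hd
    have hMb : (s.1 : Matrix (Fin 3) (Fin 3) F) = block a (c ^ q) c (a ^ q) 1 0 := by
      rw [hM, block]; simp
    have hne : block a (c ^ q) c (a ^ q) 1 0 ≠ 1 := by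
      rw [← hMb]; exact fun h => hs1' (Units.ext h)
    have hpow : ∀ n : ℕ, f s ^ n = 1 → block a (c ^ q) c (a ^ q) 1 0 ^ n = 1 := by
      intro n hn
      rw [← map_pow] at hn
      have : s ^ n = 1 := f.injective (by rw [hn, map_one])
      rw [← hMb, ← Units.val_pow_eq_pow_val, ← Subgroup.coe_pow, this]; rfl
    by_cases hs2 : f s ^ 2 = 1
    · rw [if_pos hs2]
      have h := hpow 2 hs2
      rw [block_pow_two h2 hd'] at h
      exact fixSum_order_two H _ hd hM (block_coeff_eq_zero h2 hd' hne h) hs1'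
    rw [if_neg hs2]
    by_cases hs3 : f s ^ 3 = 1
    · rw [if_pos hs3]
      have h := hpow 3 hs3
      rw [block_pow_three h2 hd'] at h
      have h := block_coeff_eq_zero h2 hd' hne h
      have hT : a ^ q + a = 1 := eq_of_sq_eq h2 (by grind)
      have : Fact (Nat.Prime 3) := ⟨Nat.prime_three⟩
      obtain ⟨z, hz, hz1⟩ := exists_root_of_unity (F := F) 3 hF (Or.inl h3)
      refine fixSum_split H _ (scalarGroup_pow L) hd hM (by rw [hT]; exact one_ne_zero) (l := z)
        ?_ (pow_q_of_dvd H.q_pos h3 hz)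
      rw [hT]
      exact mul_left_cancel₀ (sub_ne_zero.2 hz1) (by grind)
    rw [if_neg hs3]
    have hs5 : f s ^ 5 = 1 := by
      rcases alternating_five_pow (f s) with h | h | h
      · exact absurd h hs2
      · exact absurd h hs3
      · exact h
    have h := hpow 5 hs5
    rw [block_pow_five h2 hd'] at h
    have h := block_coeff_eq_zero h2 hd' hne h
    exact hD _ a c hd hM (pow_eq_zero_iff (by norm_num) |>.1 h)
  rw [Finset.sum_congr rfl fun s _ => hval s] at hB
  have hA := sum_alternating_five (fixSum q (scalarGroup q L) (1 : GL (Fin 3) F))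
    (Fintype.card (scalarGroup q L)) (2 * Fintype.card (scalarGroup q L)) D
  rw [← f.toEquiv.sum_comp] at hA
  have h1 := fixSum_one H (scalarGroup q L) hF
  simp only [MulEquiv.toEquiv_eq_coe, EquivLike.coe_coe] at hA
  rw [hA] at hB
  omega

end Main

theorem stmt9 (h q w : ℕ) (hh : 1 ≤ h) (hq : q = 2 ^ h) (heven : Even h)
    (F : Type*) [Field F] [Fintype F] (hF : Fintype.card F = q ^ 2)
    (hw : w ∣ q + 1)
    (L : Subgroup (GL (Fin 3) F)) (hLMl : (L : Set (GL (Fin 3) F)) ⊆ MlSet q F)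
    (hZcard : Nat.card ((L : Set (GL (Fin 3) F)) ∩ ZSet q F : Set (GL (Fin 3) F)) = w)
    (S : Subgroup (GL (Fin 3) F))
    (hSiso : Nonempty (↥S ≃* alternatingGroup (Fin 5)))
    (hgen : L = Subgroup.closure
      ((S : Set (GL (Fin 3) F)) ∪ ((L : Set (GL (Fin 3) F)) ∩ ZSet q F)))
    (htriv : (S : Set (GL (Fin 3) F)) ∩ ((L : Set (GL (Fin 3) F)) ∩ ZSet q F) ⊆ {1}) :
    (5 ∣ q - 1 →
      (numOrbits L (hermitianPts q F) : ℚ)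
        = 2 + ((q : ℚ) - 16) / 60
          + ((q : ℚ) / 4) * (((q : ℚ) - 1) / 15) * (((q : ℚ) + 1) / (w : ℚ))) ∧
    (5 ∣ q + 1 → ¬ (5 ∣ w) →
      (numOrbits L (hermitianPts q F) : ℚ)
        = 1 + ((q : ℚ) - 4) / 60
          + ((q : ℚ) / 4) * (((q : ℚ) - 1) / 3) * (((q : ℚ) + 1) / (5 * (w : ℚ)))) ∧
    (5 ∣ w →
      (numOrbits L (hermitianPts q F) : ℚ)
        = 1 + ((q : ℚ) - 4) / 60
          + (((q : ℚ) + 1) / (w : ℚ)) * (1 + ((q : ℚ) ^ 2 - (q : ℚ) - 12) / 60)) := by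
  classical
  have H : HermField F q := hermField_of_card hh hq hF
  have h2 := H.two
  have hq3 : 3 ∣ q - 1 := by
    obtain ⟨k, rfl⟩ := heven
    rw [hq, ← two_mul, pow_mul]
    simpa using Nat.sub_dvd_pow_sub_pow 4 1 k
  have : Fintype (scalarGroup q L) := Fintype.ofFinite _
  have hcard : Fintype.card (scalarGroup q L) = w := by
    rw [← Nat.card_eq_fintype_card, card_scalarGroup, hZcard]
  have hSL : (S : Set (GL (Fin 3) F)) ⊆ MlSet q F := by
    refine Set.Subset.trans (fun s hs => ?_) hLMl
    rw [SetLike.mem_coe, hgen]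
    exact Subgroup.subset_closure (Or.inl hs)
  obtain ⟨f⟩ := hSiso
  have hmain := numOrbits_mul H hF hq3 L S hSL f hgen
  rw [hcard] at hmain
  have hw0 : (w : ℚ) ≠ 0 := by
    rintro h0
    have : w = 0 := by exact_mod_cast h0
    rw [this, zero_dvd_iff] at hw
    omega
  have hT0 : ∀ T : F, T ^ 2 + T + 1 = 0 → T ≠ 0 := by
    rintro T hT rfl
    simp at hT
  have h5 : Fact (Nat.Prime 5) := ⟨Nat.prime_five⟩
  refine ⟨fun h => ?_, fun h hw5 => ?_, fun hw5 => ?_⟩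
  · have := hmain (2 * w) (by
      intro M a c hd hM hT
      rw [← hcard]
      obtain ⟨z, hz, hz1⟩ := exists_root_of_unity (F := F) 5 hF (Or.inl h)
      have hzq := pow_q_of_dvd H.q_pos h hz
      rcases fifth_root_charpoly h2 hz hz1 hT with h' | h'
      · exact fixSum_split H _ (scalarGroup_pow L) hd hM (hT0 _ hT) h' hzq
      · exact fixSum_split H _ (scalarGroup_pow L) hd hM (hT0 _ hT) h'
          (by rw [← pow_mul, mul_comm, pow_mul, hzq]))
    have hQ : (numOrbits L (hermitianPts q F) : ℚ) * (60 * w) + q =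
      q ^ 3 + w * (q + 1) + 15 * w + 20 * (2 * w) + 24 * (2 * w) := by exact_mod_cast this
    field_simp
    linear_combination 60 * hQ
  · have := hmain 0 (by
      intro M a c hd hM hT
      obtain ⟨z, hz, hz1⟩ := exists_root_of_unity (F := F) 5 hF (Or.inr h)
      have hzq := pow_succ_q_of_dvd h hz
      have hno : ∀ e ∈ scalarGroup q L, (e : F) ^ 2 + (a ^ q + a) * e + 1 ≠ 0 := by
        intro e he h0
        have he5 : (e : F) ^ 5 = 1 := by grind
        have he1 : e ≠ 1 := by
          rintro rfl
          apply hT0 _ hT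
          rw [Units.val_one] at h0
          grind
        have hord : orderOf e = 5 :=
          orderOf_eq_prime (Units.ext (by simpa using he5)) he1
        apply hw5
        rw [← hcard, ← hord, ← Nat.card_eq_fintype_card]
        exact Subgroup.orderOf_dvd_natCard _ he
      rcases fifth_root_charpoly h2 hz hz1 hT with h' | h'
      · exact fixSum_nonsplit_of_no_root H _ hd hM (hT0 _ hT) h' hzq hno
      · exact fixSum_nonsplit_of_no_root H _ hd hM (hT0 _ hT) h'
          (by rw [← pow_mul, mul_comm, pow_mul, hzq, one_pow]) hno)
    have hQ : (numOrbits L (hermitianPts q F) : ℚ) * (60 * w) + q =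
      q ^ 3 + w * (q + 1) + 15 * w + 20 * (2 * w) + 24 * 0 := by exact_mod_cast this
    field_simp
    linear_combination 60 * hQ
  · have := hmain (2 * (q + 1)) (by
      intro M a c hd hM hT
      obtain ⟨u, hu⟩ := exists_prime_orderOf_dvd_card' (G := scalarGroup q L) 5
        (by rw [Nat.card_eq_fintype_card, hcard]; exact hw5)
      have hu5 : ((u : Fˣ) : F) ^ 5 = 1 := by
        have := pow_orderOf_eq_one u
        rw [hu] at this
        exact congrArg (fun e : scalarGroup q L => ((e : Fˣ) : F)) this
      have hu1 : ((u : Fˣ) : F) ≠ 1 := by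
        intro h0
        have : u = 1 := Subtype.ext (Units.ext h0)
        rw [this, orderOf_one] at hu
        omega
      rcases fifth_root_charpoly h2 hu5 hu1 hT with h' | h'
      · exact fixSum_nonsplit_of_root H _ (scalarGroup_pow L) hd hM (hT0 _ hT) u.2 h'
      · exact fixSum_nonsplit_of_root H _ (scalarGroup_pow L) hd hM (hT0 _ hT)
          (l := (u : Fˣ) ^ 2) (pow_mem u.2 2) (by simpa using h'))
    have hQ : (numOrbits L (hermitianPts q F) : ℚ) * (60 * w) + q =
      q ^ 3 + w * (q + 1) + 15 * w + 20 * (2 * w) + 24 * (2 * (q + 1)) := by exact_mod_cast this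
    field_simp
    linear_combination hQ
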